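/- Let V be an irreducible module for 𝔏(B) = (W_n ⋉ A_n) ⊗ B and suppose u ∈ U((A_n ⊗ B)) is an element of the universal enveloping algebra of the abelian subalgebra A_n ⊗ B such that u·v = 0 for some non-zero vector v ∈ V. Then u acts locally nilpotently on V: for every w ∈ V there exists k ∈ ℕ with u^k·w = 0. -/

import Mathlib

open scoped TensorProduct

noncomputable section

namespace LoopWitt

/-- The standard pairing `(u | m)` between `ℂⁿ` and `ℤⁿ`. -/
def pairC {n : ℕ} (u : Fin n → ℂ) (m : Fin n → ℤ) : ℂ := ∑ i, u i * (m i : ℂ)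

/-- The standard pairing on `ℂⁿ`. -/
def pairCC {n : ℕ} (u lam : Fin n → ℂ) : ℂ := ∑ i, u i * lam i

/-- `ℤⁿ = K ⊕ ℤβ`. -/
def IsDirectSumDecomp {n : ℕ} (K : AddSubgroup (Fin n → ℤ)) (β : Fin n → ℤ) : Prop :=
  (∀ m : Fin n → ℤ, ∃ a ∈ K, ∃ d : ℤ, m = a + d • β) ∧ ∀ d : ℤ, d • β ∈ K → d = 0

/-- `r` lies in the positive part `K + ℕ₊ β` of `ℤⁿ`. -/
def posDeg {n : ℕ} (K : AddSubgroup (Fin n → ℤ)) (β : Fin n → ℤ) (r : Fin n → ℤ) : Prop :=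
  ∃ a ∈ K, ∃ d : ℤ, 1 ≤ d ∧ r = a + d • β

/-- A representation of the loop Witt algebra `Wₙ ⊗ B`, given by operators
`D u r b` (for `D(u,r) ⊗ b`, where `D(u,r) = Σ uᵢ tʳ dᵢ`), bilinear in `u` and `b`,
subject to the Witt bracket relations. -/
structure WittRep (n : ℕ) (B : Type*) [CommRing B] [Algebra ℂ B]
    (V : Type*) [AddCommGroup V] [Module ℂ V] where
  D : (Fin n → ℂ) → (Fin n → ℤ) → B → Module.End ℂ V
  D_add_u : ∀ u u' r b, D (u + u') r b = D u r b + D u' r b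
  D_smul_u : ∀ (c : ℂ) u r b, D (c • u) r b = c • D u r b
  D_add_b : ∀ u r b b', D u r (b + b') = D u r b + D u r b'
  D_smul_b : ∀ (c : ℂ) u r b, D u r (c • b) = c • D u r b
  comm_DD : ∀ u r b v s b',
    ⁅D u r b, D v s b'⁆ = D (pairC u s • v - pairC v r • u) (r + s) (b * b')

namespace WittRep

variable {n : ℕ} {B : Type*} [CommRing B] [Algebra ℂ B]
  {V : Type*} [AddCommGroup V] [Module ℂ V]

/-- The weight space of weight `lam` with respect to the Cartan subalgebra `H = ⊕ ℂ dᵢ`. -/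
def weightSpace (ρ : WittRep n B V) (lam : Fin n → ℂ) : Submodule ℂ V where
  carrier := {x | ∀ u, ρ.D u 0 1 x = pairCC u lam • x}
  add_mem' := by
    intro a b ha hb u
    rw [map_add, ha u, hb u, smul_add]
  zero_mem' := by intro u; simp
  smul_mem' := by
    intro c a ha u
    rw [map_smul, ha u, smul_comm]

/-- A weight module: the sum of the weight spaces is everything. -/
def IsWeightModule (ρ : WittRep n B V) : Prop :=
  (⨆ lam : Fin n → ℂ, ρ.weightSpace lam) = ⊤

/-- Uniformly bounded weight spaces. -/
def UniformlyBounded (ρ : WittRep n B V) : Prop :=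
  ∃ N : ℕ, ∀ lam, Module.rank ℂ ↥(ρ.weightSpace lam) ≤ (N : Cardinal)

/-- A Harish-Chandra module: a weight module with finite dimensional weight spaces. -/
def HarishChandra (ρ : WittRep n B V) : Prop :=
  ρ.IsWeightModule ∧ ∀ lam, FiniteDimensional ℂ ↥(ρ.weightSpace lam)

/-- A submodule invariant under all the operators. -/
def Invariant (ρ : WittRep n B V) (U : Submodule ℂ V) : Prop :=
  ∀ u r b, ∀ x ∈ U, ρ.D u r b x ∈ U

/-- Irreducibility. -/
def IsIrreducible (ρ : WittRep n B V) : Prop :=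
  (∃ x : V, x ≠ 0) ∧ ∀ U : Submodule ℂ V, ρ.Invariant U → U = ⊥ ∨ U = ⊤

/-- A single point evaluation module. -/
def IsSinglePointEval (ρ : WittRep n B V) : Prop :=
  ∃ η : B →ₐ[ℂ] ℂ, ∀ u r b, ρ.D u r b = η b • ρ.D u r 1

/-- Nontriviality of the action. -/
def IsNontrivial (ρ : WittRep n B V) : Prop := ∃ u r b x, ρ.D u r b x ≠ 0

/-- `z` is a highest weight vector generating the module, with respect to the
triangular decomposition determined by `ℤⁿ = K ⊕ ℤβ`. -/
def IsHWVector (ρ : WittRep n B V) (K : AddSubgroup (Fin n → ℤ)) (β : Fin n → ℤ)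
    (z : V) : Prop :=
  z ≠ 0 ∧ (∃ lam, z ∈ ρ.weightSpace lam) ∧
  (∀ u r b, posDeg K β r → ρ.D u r b z = 0) ∧
  ∀ U : Submodule ℂ V, ρ.Invariant U → z ∈ U → U = ⊤

/-- A highest weight module. -/
def IsHighestWeight (ρ : WittRep n B V) : Prop :=
  ∃ (K : AddSubgroup (Fin n → ℤ)) (β : Fin n → ℤ),
    IsDirectSumDecomp K β ∧ ∃ z, ρ.IsHWVector K β z

end WittRep

/-- A representation of the loop extended Witt algebra `𝔏_{S,n}(B) = (Wₙ ⋉ (S ⊗ Aₙ)) ⊗ B`,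
given by operators `D u r b` (for `D(u,r) ⊗ b`) and `E s m b` (for `s ⊗ tᵐ ⊗ b`),
suitably multilinear, subject to the bracket relations of `𝔏_{S,n}(B)`. -/
structure ExtWittRep (n : ℕ) (S : Type*) [AddCommGroup S] [Module ℂ S]
    (B : Type*) [CommRing B] [Algebra ℂ B]
    (V : Type*) [AddCommGroup V] [Module ℂ V] where
  D : (Fin n → ℂ) → (Fin n → ℤ) → B → Module.End ℂ V
  E : S → (Fin n → ℤ) → B → Module.End ℂ V
  D_add_u : ∀ u u' r b, D (u + u') r b = D u r b + D u' r b
  D_smul_u : ∀ (c : ℂ) u r b, D (c • u) r b = c • D u r b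
  D_add_b : ∀ u r b b', D u r (b + b') = D u r b + D u r b'
  D_smul_b : ∀ (c : ℂ) u r b, D u r (c • b) = c • D u r b
  E_add_s : ∀ s s' m b, E (s + s') m b = E s m b + E s' m b
  E_smul_s : ∀ (c : ℂ) s m b, E (c • s) m b = c • E s m b
  E_add_b : ∀ s m b b', E s m (b + b') = E s m b + E s m b'
  E_smul_b : ∀ (c : ℂ) s m b, E s m (c • b) = c • E s m b
  comm_DD : ∀ u r b v s b',
    ⁅D u r b, D v s b'⁆ = D (pairC u s • v - pairC v r • u) (r + s) (b * b')
  comm_DE : ∀ u r b s m b', ⁅D u r b, E s m b'⁆ = pairC u m • E s (m + r) (b * b')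
  comm_EE : ∀ s m b s' m' b', ⁅E s m b, E s' m' b'⁆ = 0

namespace ExtWittRep

variable {n : ℕ} {S : Type*} [AddCommGroup S] [Module ℂ S]
  {B : Type*} [CommRing B] [Algebra ℂ B]
  {V : Type*} [AddCommGroup V] [Module ℂ V]

/-- The weight space of the weight given by `lam` on `H` and the linear functional `c`
on `S ≅ S ⊗ t⁰ (⊗ 1)`, with respect to the Cartan subalgebra `H ⊕ (S ⊗ t⁰) (⊗ 1)`. -/
def weightSpace (ρ : ExtWittRep n S B V) (lam : Fin n → ℂ) (c : S →ₗ[ℂ] ℂ) :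
    Submodule ℂ V where
  carrier := {x | (∀ u, ρ.D u 0 1 x = pairCC u lam • x) ∧ ∀ s, ρ.E s 0 1 x = c s • x}
  add_mem' := by
    intro a b ha hb
    refine ⟨fun u => ?_, fun s => ?_⟩
    · rw [map_add, ha.1 u, hb.1 u, smul_add]
    · rw [map_add, ha.2 s, hb.2 s, smul_add]
  zero_mem' := by exact ⟨fun u => by simp, fun s => by simp⟩
  smul_mem' := by
    intro t a ha
    refine ⟨fun u => ?_, fun s => ?_⟩
    · rw [map_smul, ha.1 u, smul_comm]
    · rw [map_smul, ha.2 s, smul_comm]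

/-- A weight module: the weight spaces span. -/
def IsWeightModule (ρ : ExtWittRep n S B V) : Prop :=
  (⨆ p : (Fin n → ℂ) × (S →ₗ[ℂ] ℂ), ρ.weightSpace p.1 p.2) = ⊤

/-- Uniformly bounded weight spaces. -/
def UniformlyBounded (ρ : ExtWittRep n S B V) : Prop :=
  ∃ N : ℕ, ∀ lam c, Module.rank ℂ ↥(ρ.weightSpace lam c) ≤ (N : Cardinal)

/-- Harish-Chandra: a weight module with finite dimensional weight spaces. -/
def HarishChandra (ρ : ExtWittRep n S B V) : Prop :=
  ρ.IsWeightModule ∧ ∀ lam c, FiniteDimensional ℂ ↥(ρ.weightSpace lam c)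

/-- Invariant submodule. -/
def Invariant (ρ : ExtWittRep n S B V) (U : Submodule ℂ V) : Prop :=
  (∀ u r b, ∀ x ∈ U, ρ.D u r b x ∈ U) ∧ (∀ s m b, ∀ x ∈ U, ρ.E s m b x ∈ U)

/-- Irreducibility. -/
def IsIrreducible (ρ : ExtWittRep n S B V) : Prop :=
  (∃ x : V, x ≠ 0) ∧ ∀ U : Submodule ℂ V, ρ.Invariant U → U = ⊥ ∨ U = ⊤

/-- A single point evaluation module. -/
def IsSinglePointEval (ρ : ExtWittRep n S B V) : Prop :=
  ∃ η : B →ₐ[ℂ] ℂ, (∀ u r b, ρ.D u r b = η b • ρ.D u r 1) ∧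
    ∀ s m b, ρ.E s m b = η b • ρ.E s m 1

/-- Single point generalised evaluation module: the action factors through
`𝔤 ⊗ B/𝔪ᵏ` for some maximal ideal `𝔪` and some `k`. -/
def IsGenEval (ρ : ExtWittRep n S B V) : Prop :=
  ∃ 𝔪 : Ideal B, 𝔪.IsMaximal ∧ ∃ k : ℕ, ∀ b ∈ 𝔪 ^ k,
    (∀ u r, ρ.D u r b = 0) ∧ ∀ s m, ρ.E s m b = 0

/-- Nontriviality of the action. -/
def IsNontrivial (ρ : ExtWittRep n S B V) : Prop :=
  (∃ u r b x, ρ.D u r b x ≠ 0) ∨ ∃ s m b x, ρ.E s m b x ≠ 0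

/-- The submodule of vectors on which the whole Lie algebra acts trivially. -/
def trivVectors (ρ : ExtWittRep n S B V) : Submodule ℂ V where
  carrier := {x | (∀ u r b, ρ.D u r b x = 0) ∧ ∀ s m b, ρ.E s m b x = 0}
  add_mem' := by
    intro a b ha hb
    exact ⟨fun u r c => by rw [map_add, ha.1 u r c, hb.1 u r c, add_zero],
      fun s m c => by rw [map_add, ha.2 s m c, hb.2 s m c, add_zero]⟩
  zero_mem' := ⟨fun u r c => by simp, fun s m c => by simp⟩
  smul_mem' := by
    intro t a ha
    exact ⟨fun u r c => by rw [map_smul, ha.1 u r c, smul_zero],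
      fun s m c => by rw [map_smul, ha.2 s m c, smul_zero]⟩

/-- Highest weight vector for the triangular decomposition determined by `ℤⁿ = K ⊕ ℤβ`,
generating the whole module. -/
def IsHWVector (ρ : ExtWittRep n S B V) (K : AddSubgroup (Fin n → ℤ)) (β : Fin n → ℤ)
    (z : V) : Prop :=
  z ≠ 0 ∧ (∃ lam c, z ∈ ρ.weightSpace lam c) ∧
  (∀ u r b, posDeg K β r → ρ.D u r b z = 0) ∧
  (∀ s m b, posDeg K β m → ρ.E s m b z = 0) ∧
  ∀ U : Submodule ℂ V, ρ.Invariant U → z ∈ U → U = ⊤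

/-- Highest weight module. -/
def IsHighestWeight (ρ : ExtWittRep n S B V) : Prop :=
  ∃ (K : AddSubgroup (Fin n → ℤ)) (β : Fin n → ℤ),
    IsDirectSumDecomp K β ∧ ∃ z, ρ.IsHWVector K β z

/-- Invariance under the degree-`K` part `(𝔏_{S,n}(B))_K`. -/
def InvariantK (ρ : ExtWittRep n S B V) (K : AddSubgroup (Fin n → ℤ))
    (U : Submodule ℂ V) : Prop :=
  (∀ u, ∀ r ∈ K, ∀ b, ∀ x ∈ U, ρ.D u r b x ∈ U) ∧
    ∀ s, ∀ m ∈ K, ∀ b, ∀ x ∈ U, ρ.E s m b x ∈ U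

/-- The highest weight space: the `(𝔏_{S,n}(B))_K`-submodule generated by `z`. -/
def hwSpace (ρ : ExtWittRep n S B V) (K : AddSubgroup (Fin n → ℤ)) (z : V) :
    Submodule ℂ V :=
  sInf {U : Submodule ℂ V | z ∈ U ∧ ρ.InvariantK K U}

end ExtWittRep

end LoopWitt

open LoopWitt

/-! The image of `U(Aₙ ⊗ B)` in `End V` is commutative, and bracketing one of its generators with
an operator `d` of `𝔏(B)` gives an operator that commutes with all the generators. By the Jacobi
identity `(ad u)² d = 0`, so every generalized eigenspace of `u` is an `𝔏(B)`-submodule. The one for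
the eigenvalue `0` contains `v`, hence is all of `V` by irreducibility. -/

section CommutatorBracket

attribute [local instance] LieRing.ofAssociativeRing

theorem mapsTo_maxGenEigenspace_of_ad_pow_apply_eq_zero {R M : Type*} [CommRing R]
    [AddCommGroup M] [Module R M] {f d : Module.End R M} {k : ℕ}
    (h : (LieAlgebra.ad R (Module.End R M) f ^ k) d = 0) (μ : R) :
    Set.MapsTo d (f.maxGenEigenspace μ) (f.maxGenEigenspace μ) := by
  intro x hx
  have hd : d ∈ (LieModule.toEnd R (Module.End R M) (Module.End R M) f).maxGenEigenspace 0 :=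
    Module.End.mem_maxGenEigenspace _ _ _ |>.mpr ⟨k, by rwa [zero_smul, sub_zero]⟩
  have hdx : ⁅d, x⁆ ∈ (LieModule.toEnd R (Module.End R M) M f).maxGenEigenspace (0 + μ) :=
    LieModule.lie_mem_maxGenEigenspace_toEnd hd hx
  rwa [zero_add] at hdx

theorem lie_lie_eq_zero_of_mem_adjoin {R A : Type*} [CommSemiring R] [Ring A] [Algebra R A]
    {s : Set A} (hs : ∀ x ∈ s, ∀ y ∈ s, ⁅x, y⁆ = 0) {d : A}
    (hd : ∀ x ∈ s, ∀ y ∈ s, ⁅x, ⁅y, d⁆⁆ = 0) {f g : A}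
    (hf : f ∈ Algebra.adjoin R s) (hg : g ∈ Algebra.adjoin R s) : ⁅f, ⁅g, d⁆⁆ = 0 := by
  have lie_eq_zero {a b : A} (hb : b ∈ Algebra.adjoin R s) (ha : ∀ x ∈ s, ⁅x, a⁆ = 0) :
      ⁅b, a⁆ = 0 :=
    (Algebra.commute_of_mem_adjoin_of_forall_mem_commute hb
      fun x hx => (commute_iff_lie_eq.mpr (ha x hx)).symm).symm.lie_eq
  refine lie_eq_zero hf fun x hx => ?_
  have hxg : ⁅x, g⁆ = 0 := by
    rw [← lie_skew, lie_eq_zero hg fun y hy => hs y hy x hx, neg_zero]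
  have hgx : ⁅g, ⁅x, d⁆⁆ = 0 := lie_eq_zero hg fun y hy => hd y hy x hx
  rw [leibniz_lie, hxg, hgx, zero_lie, add_zero]

end CommutatorBracket

namespace LoopWitt.ExtWittRep

attribute [local instance] LieRing.ofAssociativeRing

variable {n : ℕ} {S : Type*} [AddCommGroup S] [Module ℂ S]
  {B : Type*} [CommRing B] [Algebra ℂ B] {V : Type*} [AddCommGroup V] [Module ℂ V]
  {ρ : ExtWittRep n S B V}

theorem IsIrreducible.eq_top_of_mem (hρ : ρ.IsIrreducible) {U : Submodule ℂ V}
    (hU : ρ.Invariant U) {v : V} (hv : v ≠ 0) (hvU : v ∈ U) : U = ⊤ :=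
  (hρ.2 U hU).resolve_left (Submodule.ne_bot_iff U |>.mpr ⟨v, hvU, hv⟩)

theorem lie_E_lie_E_D (ρ : ExtWittRep n S B V) (s s' : S) (m m' r : Fin n → ℤ) (b b' c : B)
    (a : Fin n → ℂ) : ⁅ρ.E s m b, ⁅ρ.E s' m' b', ρ.D a r c⁆⁆ = 0 := by
  rw [← lie_skew (ρ.E s' m' b'), ρ.comm_DE, lie_neg, lie_smul, ρ.comm_EE, smul_zero, neg_zero]

variable (ρ) in
/-- The image in `End V` of the enveloping algebra of the abelian subalgebra `(S ⊗ Aₙ) ⊗ B`,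
encoded as the unital subalgebra generated by the operators of that subalgebra. -/
def abelianEnvelope : Subalgebra ℂ (Module.End ℂ V) :=
  Algebra.adjoin ℂ {f | ∃ s m b, f = ρ.E s m b}

theorem lie_lie_D_of_mem_abelianEnvelope {f g : Module.End ℂ V} (hf : f ∈ ρ.abelianEnvelope)
    (hg : g ∈ ρ.abelianEnvelope) (a : Fin n → ℂ) (r : Fin n → ℤ) (b : B) :
    ⁅f, ⁅g, ρ.D a r b⁆⁆ = 0 := by
  refine lie_lie_eq_zero_of_mem_adjoin ?_ ?_ hf hg
  · rintro _ ⟨s, m, c, rfl⟩ _ ⟨s', m', c', rfl⟩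
    exact ρ.comm_EE s m c s' m' c'
  · rintro _ ⟨s, m, c, rfl⟩ _ ⟨s', m', c', rfl⟩
    exact ρ.lie_E_lie_E_D s s' m m' r c c' b a

theorem commute_E_of_mem_abelianEnvelope {f : Module.End ℂ V} (hf : f ∈ ρ.abelianEnvelope)
    (s : S) (m : Fin n → ℤ) (b : B) : Commute f (ρ.E s m b) := by
  refine (Algebra.commute_of_mem_adjoin_of_forall_mem_commute hf ?_).symm
  rintro _ ⟨s', m', b', rfl⟩
  exact commute_iff_lie_eq.mpr (ρ.comm_EE s m b s' m' b')

theorem invariant_maxGenEigenspace {f : Module.End ℂ V} (hf : f ∈ ρ.abelianEnvelope) (μ : ℂ) :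
    ρ.Invariant (f.maxGenEigenspace μ) := by
  refine ⟨fun a r b => ?_, fun s m b => ?_⟩
  · have had : (LieAlgebra.ad ℂ (Module.End ℂ V) f ^ 2) (ρ.D a r b) = 0 := by
      rw [sq, Module.End.mul_apply, LieAlgebra.ad_apply, LieAlgebra.ad_apply]
      exact lie_lie_D_of_mem_abelianEnvelope hf hf a r b
    exact mapsTo_maxGenEigenspace_of_ad_pow_apply_eq_zero had μ
  · exact Module.End.mapsTo_maxGenEigenspace_of_comm (commute_E_of_mem_abelianEnvelope hf s m b) μ

end LoopWitt.ExtWittRep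

theorem stmt18_general {n : ℕ} {S B V : Type*} [AddCommGroup S] [Module ℂ S]
    [CommRing B] [Algebra ℂ B] [AddCommGroup V] [Module ℂ V]
    {ρ : ExtWittRep n S B V} (hρ : ρ.IsIrreducible) {u : Module.End ℂ V}
    (hu : u ∈ ρ.abelianEnvelope) {v : V} (hv : v ≠ 0) (huv : u v = 0) (w : V) :
    ∃ k : ℕ, (u ^ k) w = 0 := by
  have hvU : v ∈ u.maxGenEigenspace 0 :=
    (u.mem_maxGenEigenspace 0 v).mpr ⟨1, by simpa using huv⟩
  have htop : u.maxGenEigenspace 0 = ⊤ :=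
    hρ.eq_top_of_mem (ExtWittRep.invariant_maxGenEigenspace hu 0) hv hvU
  have hw : w ∈ u.maxGenEigenspace 0 := htop ▸ Submodule.mem_top
  simpa using (u.mem_maxGenEigenspace 0 w).mp hw

/-- If an element `u` of the universal enveloping algebra of the
abelian subalgebra `Aₙ ⊗ B` of `𝔏(B)` (acting on an irreducible `𝔏(B)`-module `V`, its
image is the unital subalgebra of `End V` generated by the operators of `Aₙ ⊗ B`) kills
some non-zero vector of `V`, then it acts locally nilpotently on `V`. -/
theorem stmt18 {n : ℕ} {B V : Type*}
    [CommRing B] [Algebra ℂ B] [Algebra.FiniteType ℂ B]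
    [AddCommGroup V] [Module ℂ V]
    (ρ : ExtWittRep n ℂ B V) (hirr : ρ.IsIrreducible)
    (u : Module.End ℂ V)
    (hu : u ∈ Algebra.adjoin ℂ {f : Module.End ℂ V | ∃ m b, f = ρ.E 1 m b})
    (v : V) (hv : v ≠ 0) (huv : u v = 0) :
    ∀ w : V, ∃ k : ℕ, (u ^ k) w = 0 := by
  have hu' : u ∈ ρ.abelianEnvelope :=
    Algebra.adjoin_mono (by rintro _ ⟨m, b, rfl⟩; exact ⟨1, m, b, rfl⟩) hu
  exact stmt18_general hirr hu' hv huv
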